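/- Let A be a linear relation between X and Z and B a linear relation between X and Y. The following are equivalent: (i) there exists a linear relation C between Y and Z which is (the graph of) an injective operator (mul C = {0} and ker C = {0}) such that A ⊆ C∘B; (ii) dom A ⊆ dom B, ker A ⊆ ker B, and dim(A(dom A ∩ ker B)) ≤ dim(B(ker A)) (as cardinals). -/

import Mathlib

/-!
Linear relations between vector spaces, following Popovici–Sebestyén,
"Factorizations of Linear Relations".

A linear relation between `X` and `Y` is a linear subspace of `X × Y`,
formalized as `Submodule 𝕂 (X × Y)`.
-/

universe u

namespace LinRel

variable {𝕂 : Type u} [Field 𝕂]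
variable {X Y Z : Type u} [AddCommGroup X] [Module 𝕂 X]
  [AddCommGroup Y] [Module 𝕂 Y] [AddCommGroup Z] [Module 𝕂 Z]

/-- The domain of a linear relation. -/
def dom (R : Submodule 𝕂 (X × Y)) : Submodule 𝕂 X :=
  R.map (LinearMap.fst 𝕂 X Y)

/-- The range of a linear relation. -/
def ran (R : Submodule 𝕂 (X × Y)) : Submodule 𝕂 Y :=
  R.map (LinearMap.snd 𝕂 X Y)

/-- The kernel of a linear relation: `{x | (x, 0) ∈ R}`. -/
def ker (R : Submodule 𝕂 (X × Y)) : Submodule 𝕂 X :=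
  R.comap ((LinearMap.id : X →ₗ[𝕂] X).prod (0 : X →ₗ[𝕂] Y))

/-- The multivalued part of a linear relation: `{y | (0, y) ∈ R}`. -/
def mul (R : Submodule 𝕂 (X × Y)) : Submodule 𝕂 Y :=
  R.comap ((0 : Y →ₗ[𝕂] X).prod (LinearMap.id : Y →ₗ[𝕂] Y))

/-- The inverse of a linear relation: `{(y, x) | (x, y) ∈ R}`. -/
def inv (R : Submodule 𝕂 (X × Y)) : Submodule 𝕂 (Y × X) :=
  R.map ((LinearMap.snd 𝕂 X Y).prod (LinearMap.fst 𝕂 X Y))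

/-- The product (composition) of two linear relations:
`S ∘ R = {(x, z) | ∃ y, (x, y) ∈ R ∧ (y, z) ∈ S}`. -/
def comp (S : Submodule 𝕂 (Y × Z)) (R : Submodule 𝕂 (X × Y)) : Submodule 𝕂 (X × Z) where
  carrier := {p | ∃ y, (p.1, y) ∈ R ∧ (y, p.2) ∈ S}
  add_mem' := by
    rintro ⟨a, c⟩ ⟨a', c'⟩ ⟨y, h1, h2⟩ ⟨y', h1', h2'⟩
    exact ⟨y + y', R.add_mem h1 h1', S.add_mem h2 h2'⟩
  zero_mem' := ⟨0, R.zero_mem, S.zero_mem⟩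
  smul_mem' := by
    rintro c ⟨a, b⟩ ⟨y, h1, h2⟩
    exact ⟨c • y, R.smul_mem c h1, S.smul_mem c h2⟩

/-- The image `R(X₀)` of a subspace `X₀` under a linear relation `R`. -/
def img (R : Submodule 𝕂 (X × Y)) (X₀ : Submodule 𝕂 X) : Submodule 𝕂 Y :=
  ran (R ⊓ X₀.prod ⊤)

/-- The preimage `R⁻¹(Y₀)` of a subspace `Y₀` under a linear relation `R`. -/
def preimg (R : Submodule 𝕂 (X × Y)) (Y₀ : Submodule 𝕂 Y) : Submodule 𝕂 X :=
  img (inv R) Y₀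

end LinRel


open LinRel

variable {𝕂 : Type u} [Field 𝕂]
variable {X Y Z : Type u} [AddCommGroup X] [Module 𝕂 X]
  [AddCommGroup Y] [Module 𝕂 Y] [AddCommGroup Z] [Module 𝕂 Z]

/-!
Consider the quotient `D = A ∘ B⁻¹ = {(y, z) | ∃ x, (x, y) ∈ B ∧ (x, z) ∈ A}`, for which
`mul D = A(dom A ∩ ker B)` and `ker D = B(ker A)`. Given the inclusions of domains and kernels,
factoring `A` through `B` by an injective operator amounts to finding an injective operator
`C ⊆ D` with the range of `D`. Such a `C` exists iff `dim (mul D) ≤ dim (ker D)`: it has to embed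
`mul D` into `ker D` by `C⁻¹`, and conversely a linear section of `D → ran D` can be changed on
`mul D` to any prescribed embedding into `ker D`, which makes it injective.
-/

namespace LinRel

section Membership

variable {R : Submodule 𝕂 (X × Y)}

theorem mem_dom {x : X} : x ∈ dom R ↔ ∃ y, (x, y) ∈ R := by
  simp [dom]

theorem mem_ran {y : Y} : y ∈ ran R ↔ ∃ x, (x, y) ∈ R := by
  simp [ran]

theorem mem_ker {x : X} : x ∈ ker R ↔ (x, 0) ∈ R := by
  simp [ker]

theorem mem_mul {y : Y} : y ∈ mul R ↔ (0, y) ∈ R := by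
  simp [mul]

theorem mem_inv {x : X} {y : Y} : (y, x) ∈ inv R ↔ (x, y) ∈ R := by
  simp [inv]

theorem mem_img {X₀ : Submodule 𝕂 X} {y : Y} : y ∈ img R X₀ ↔ ∃ x ∈ X₀, (x, y) ∈ R := by
  simp [img, ran, and_comm]

theorem mem_comp {S : Submodule 𝕂 (Y × Z)} {x : X} {z : Z} :
    (x, z) ∈ comp S R ↔ ∃ y, (x, y) ∈ R ∧ (y, z) ∈ S :=
  Iff.rfl

theorem mem_of_mem_of_sub_mem_ker {x x' : X} {y : Y} (h : (x', y) ∈ R) (hx : x - x' ∈ ker R) :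
    (x, y) ∈ R := by
  simpa using R.add_mem (mem_ker.1 hx) h

theorem sub_mem_ker {x x' : X} {y : Y} (h : (x, y) ∈ R) (h' : (x', y) ∈ R) : x - x' ∈ ker R :=
  mem_ker.2 <| by simpa using R.sub_mem h h'

theorem mul_le_ran : mul R ≤ ran R :=
  fun _ hy => mem_ran.2 ⟨0, mem_mul.1 hy⟩

theorem dom_mono {S : Submodule 𝕂 (X × Y)} (h : R ≤ S) : dom R ≤ dom S :=
  Submodule.map_mono h

theorem ker_mono {S : Submodule 𝕂 (X × Y)} (h : R ≤ S) : ker R ≤ ker S :=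
  Submodule.comap_mono h

end Membership

section Operator

theorem rank_img_le {R : Submodule 𝕂 (X × Y)} (hR : mul R = ⊥) (X₀ : Submodule 𝕂 X) :
    Module.rank 𝕂 (img R X₀) ≤ Module.rank 𝕂 X₀ := by
  let fstR : ↥(R ⊓ X₀.prod ⊤) →ₗ[𝕂] X₀ := (LinearMap.fst 𝕂 X Y).restrict fun _ hp => hp.2.1
  have fstR_injective : Function.Injective fstR := by
    rw [injective_iff_map_eq_zero]
    rintro ⟨⟨x, y⟩, hxy, _⟩ h
    obtain rfl : x = 0 := congrArg Subtype.val h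
    have hy : y ∈ mul R := mem_mul.2 hxy
    obtain rfl : y = 0 := by rwa [hR, Submodule.mem_bot] at hy
    rfl
  exact (rank_map_le _ _).trans (LinearMap.rank_le_of_injective fstR fstR_injective)

variable {D : Submodule 𝕂 (Y × Z)}

theorem rank_mul_le_rank_ker_of_ran_le {C : Submodule 𝕂 (Y × Z)} (hC : mul C = ⊥)
    (hran : ran D ≤ ran (C ⊓ D)) :
    Module.rank 𝕂 (mul D) ≤ Module.rank 𝕂 (ker D) := by
  have mul_le_img : mul D ≤ img C (ker D) := fun z hz => by
    obtain ⟨y, hyC, hyD⟩ := mem_ran.1 (hran (mul_le_ran hz))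
    exact mem_img.2 ⟨y, by simpa using sub_mem_ker hyD (mem_mul.1 hz), hyC⟩
  exact (Submodule.rank_mono mul_le_img).trans (rank_img_le hC _)

theorem exists_linear_section (D : Submodule 𝕂 (Y × Z)) :
    ∃ g : ran D →ₗ[𝕂] Y, ∀ z, (g z, (z : Z)) ∈ D := by
  obtain ⟨s, hs⟩ := ((LinearMap.snd 𝕂 Y Z).submoduleMap D).exists_rightInverse_of_surjective
    (LinearMap.range_eq_top.2 (LinearMap.submoduleMap_surjective _ D))
  refine ⟨LinearMap.fst 𝕂 Y Z ∘ₗ D.subtype ∘ₗ s, fun z => ?_⟩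
  have snd_s : (s z : Y × Z).2 = z := congrArg Subtype.val (LinearMap.congr_fun hs z)
  exact snd_s ▸ (s z).2

theorem exists_injective_linear_section
    (h : Module.rank 𝕂 (mul D) ≤ Module.rank 𝕂 (ker D)) :
    ∃ g : ran D →ₗ[𝕂] Y, Function.Injective g ∧ ∀ z, (g z, (z : Z)) ∈ D := by
  obtain ⟨g, hg⟩ := exists_linear_section D
  obtain ⟨f, hf⟩ := rank_le_iff_exists_linearMap.1 h
  let ι : mul D →ₗ[𝕂] ran D := Submodule.inclusion mul_le_ran
  obtain ⟨P, hP⟩ := ι.exists_leftInverse_of_injective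
    (LinearMap.ker_eq_bot.2 (Submodule.inclusion_injective _))
  let φ : ran D →ₗ[𝕂] Y := g ∘ₗ (LinearMap.id - ι ∘ₗ P) + (ker D).subtype ∘ₗ f ∘ₗ P
  have φ_mem (z : ran D) : (φ z, (z : Z)) ∈ D := by
    have hsum := D.add_mem (D.add_mem (hg (z - ι (P z))) (mem_mul.1 (P z).2))
      (mem_ker.1 (f (P z)).2)
    simpa [φ, ι] using hsum
  have φ_ι (w : mul D) : φ (ι w) = f w := by
    have P_ι : P (ι w) = w := LinearMap.congr_fun hP w
    simp [φ, P_ι]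
  refine ⟨φ, (injective_iff_map_eq_zero φ).2 fun z hz => ?_, φ_mem⟩
  obtain ⟨w, rfl⟩ : ∃ w, ι w = z := ⟨⟨z, mem_mul.2 (hz ▸ φ_mem z)⟩, rfl⟩
  have f_w : f w = 0 := Subtype.ext ((φ_ι w).symm.trans hz)
  rw [(map_eq_zero_iff f hf).1 f_w, map_zero]

theorem exists_injective_operator_le (h : Module.rank 𝕂 (mul D) ≤ Module.rank 𝕂 (ker D)) :
    ∃ C ≤ D, mul C = ⊥ ∧ ker C = ⊥ ∧ ran D ≤ ran C := by
  obtain ⟨g, g_injective, hg⟩ := exists_injective_linear_section h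
  refine ⟨LinearMap.range (g.prod (ran D).subtype), ?_, ?_, ?_, ?_⟩
  · rintro _ ⟨z, rfl⟩
    exact hg z
  · refine (Submodule.eq_bot_iff _).2 fun z hz => ?_
    obtain ⟨w, hw⟩ := mem_mul.1 hz
    obtain ⟨g_w, rfl⟩ := Prod.mk.inj hw
    rw [(map_eq_zero_iff g g_injective).1 g_w, map_zero]
  · refine (Submodule.eq_bot_iff _).2 fun y hy => ?_
    obtain ⟨w, hw⟩ := mem_ker.1 hy
    obtain ⟨rfl, coe_w⟩ := Prod.mk.inj hw
    obtain rfl : w = 0 := Subtype.ext coe_w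
    exact map_zero g
  · exact fun z hz => mem_ran.2 ⟨g ⟨z, hz⟩, ⟨z, hz⟩, rfl⟩

end Operator

section Quotient

variable {A : Submodule 𝕂 (X × Z)} {B : Submodule 𝕂 (X × Y)} {C : Submodule 𝕂 (Y × Z)}

theorem dom_comp_le : dom (comp C B) ≤ dom B := fun _ hx => by
  obtain ⟨_, y, hB, -⟩ := mem_dom.1 hx
  exact mem_dom.2 ⟨y, hB⟩

theorem ker_comp_le (hC : ker C = ⊥) : ker (comp C B) ≤ ker B := fun x hx => by
  obtain ⟨y, hB, hy⟩ := mem_comp.1 (mem_ker.1 hx)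
  obtain rfl : y = 0 := (Submodule.eq_bot_iff _).1 hC y (mem_ker.2 hy)
  exact mem_ker.2 hB

theorem mem_comp_inv {y : Y} {z : Z} :
    (y, z) ∈ comp A (inv B) ↔ ∃ x, (x, y) ∈ B ∧ (x, z) ∈ A := by
  simp only [mem_comp, mem_inv]

theorem mul_comp_inv (A : Submodule 𝕂 (X × Z)) (B : Submodule 𝕂 (X × Y)) :
    mul (comp A (inv B)) = img A (dom A ⊓ ker B) := by
  ext z
  simp only [mem_mul, mem_comp_inv, mem_img, Submodule.mem_inf, mem_dom, mem_ker]
  exact exists_congr fun _ =>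
    ⟨fun ⟨hB, hA⟩ => ⟨⟨⟨z, hA⟩, hB⟩, hA⟩, fun ⟨⟨_, hB⟩, hA⟩ => ⟨hB, hA⟩⟩

theorem ker_comp_inv (A : Submodule 𝕂 (X × Z)) (B : Submodule 𝕂 (X × Y)) :
    ker (comp A (inv B)) = img B (ker A) := by
  ext y
  simp only [mem_ker, mem_comp_inv, mem_img, and_comm]

theorem ran_comp_inv_le_of_le_comp (h : A ≤ comp C B) :
    ran (comp A (inv B)) ≤ ran (C ⊓ comp A (inv B)) := fun z hz => by
  obtain ⟨_, x, -, hA⟩ := mem_ran.1 hz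
  obtain ⟨y, hB, hC⟩ := mem_comp.1 (h hA)
  exact mem_ran.2 ⟨y, hC, mem_comp_inv.2 ⟨x, hB, hA⟩⟩

theorem ran_le_ran_comp_inv (h : dom A ≤ dom B) : ran A ≤ ran (comp A (inv B)) := fun z hz => by
  obtain ⟨x, hA⟩ := mem_ran.1 hz
  obtain ⟨y, hB⟩ := mem_dom.1 (h (mem_dom.2 ⟨z, hA⟩))
  exact mem_ran.2 ⟨y, mem_comp_inv.2 ⟨x, hB, hA⟩⟩

theorem le_comp_of_le_comp_inv (hker : ker A ≤ ker B) (hC : C ≤ comp A (inv B))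
    (hran : ran A ≤ ran C) : A ≤ comp C B := by
  rintro ⟨x, z⟩ hA
  obtain ⟨y, hyz⟩ := mem_ran.1 (hran (mem_ran.2 ⟨x, hA⟩))
  obtain ⟨x', hB', hA'⟩ := mem_comp_inv.1 (hC hyz)
  exact mem_comp.2 ⟨y, mem_of_mem_of_sub_mem_ker hB' (hker (sub_mem_ker hA hA')), hyz⟩

end Quotient

end LinRel

/-- Corollary 5.7: there exists an injective operator `C` with `A ⊆ CB` iff
`dom A ⊆ dom B`, `ker A ⊆ ker B` and
`dim A(dom A ∩ ker B) ≤ dim B(ker A)`. -/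
theorem statement_18 (A : Submodule 𝕂 (X × Z)) (B : Submodule 𝕂 (X × Y)) :
    (∃ C : Submodule 𝕂 (Y × Z), mul C = ⊥ ∧ ker C = ⊥ ∧ A ≤ comp C B) ↔
      (dom A ≤ dom B ∧ ker A ≤ ker B ∧
        Module.rank 𝕂 (img A (dom A ⊓ ker B)) ≤ Module.rank 𝕂 (img B (ker A))) := by
  rw [← mul_comp_inv, ← ker_comp_inv]
  constructor
  · rintro ⟨C, hmul, hker, hA⟩
    exact ⟨(dom_mono hA).trans dom_comp_le, (ker_mono hA).trans (ker_comp_le hker),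
      rank_mul_le_rank_ker_of_ran_le hmul (ran_comp_inv_le_of_le_comp hA)⟩
  · rintro ⟨hdom, hker, hrank⟩
    obtain ⟨C, hC, hCmul, hCker, hran⟩ := exists_injective_operator_le hrank
    exact ⟨C, hCmul, hCker,
      le_comp_of_le_comp_inv hker hC ((ran_le_ran_comp_inv hdom).trans hran)⟩
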